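/- arXiv:2008.09368 — 5 statements merged into one kernel-verified Lean document; each statement's English description precedes it below -/
import Mathlib

section
/- Let $m \geq K \geq 1$ be integers, let $g_1 \geq g_2 \geq \dots \geq g_m$ be real numbers in $[0,1]$, and let $w_1 \geq w_2 \geq \dots \geq w_K$ be real numbers in $[0,1]$. Then for every injective map $\sigma \colon \{1,\dots,K\} \to \{1,\dots,m\}$ one has $1 - \prod_{k=1}^{K}\bigl(1 - g_{\sigma(k)} w_k\bigr) \leq 1 - \prod_{k=1}^{K}\bigl(1 - g_k w_k\bigr)$; equivalently, $\prod_{k=1}^{K}\bigl(1 - g_{\sigma(k)} w_k\bigr) \geq \prod_{k=1}^{K}\bigl(1 - g_k w_k\bigr)$. In other words, the assignment placing the item with the $k$-th largest attractiveness value at the $k$-th slot maximizes the probability $1 - \prod_{k=1}^{K}(1-g_{\sigma(k)}w_k)$ that at least one slot is clicked. -/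
open Finset

/-!
The proof is an exchange argument, by induction on the number of slots. Among the chosen items let
`σ j` be the one of largest index, hence the least attractive. Exchanging it with the item in the
last slot does not increase the no-click probability (`prod_swap_last_le`), because
`(1 - a x) (1 - b y) - (1 - b x) (1 - a y) = (b - a) (x - y)`. After the exchange the last slot
`K` holds an item of index at least `K`, since `K + 1` distinct indices do not fit below `K`; its
factor is therefore at least the sorted one, and the induction hypothesis handles the other slots.
-/

/-- Moving a least attractive item `σ j` to the last slot does not increase the no-click
probability. -/
lemma prod_swap_last_le {m K : ℕ} (g : Fin m → ℝ) (w : Fin (K + 1) → ℝ)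
    (hg : ∀ i, g i ∈ Set.Icc (0 : ℝ) 1) (hw : ∀ k, w k ∈ Set.Icc (0 : ℝ) 1)
    (hwsorted : ∀ i j : Fin (K + 1), i ≤ j → w j ≤ w i)
    (σ : Fin (K + 1) → Fin m) (j : Fin (K + 1)) (hj : ∀ k, g (σ j) ≤ g (σ k)) :
    ∏ k, (1 - g (σ (Equiv.swap j (Fin.last K) k)) * w k) ≤ ∏ k, (1 - g (σ k) * w k) := by
  by_cases hjl : j = Fin.last K
  · simp [hjl]
  have hmem : j ∈ univ.erase (Fin.last K) := by simp [hjl]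
  rw [← mul_prod_erase univ _ (mem_univ (Fin.last K)), ← mul_prod_erase _ _ hmem,
    ← mul_prod_erase univ (fun k => 1 - g (σ k) * w k) (mem_univ (Fin.last K)),
    ← mul_prod_erase _ (fun k => 1 - g (σ k) * w k) hmem, ← mul_assoc, ← mul_assoc]
  have hrest : ∏ k ∈ (univ.erase (Fin.last K)).erase j,
      (1 - g (σ (Equiv.swap j (Fin.last K) k)) * w k) =
      ∏ k ∈ (univ.erase (Fin.last K)).erase j, (1 - g (σ k) * w k) := by
    refine prod_congr rfl fun k hk => ?_
    simp only [mem_erase] at hk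
    rw [Equiv.swap_apply_of_ne_of_ne hk.1 hk.2.1]
  rw [hrest]
  refine mul_le_mul_of_nonneg_right ?_ (prod_nonneg fun k _ => ?_)
  · rw [Equiv.swap_apply_right, Equiv.swap_apply_left]
    nlinarith [mul_nonneg (sub_nonneg.2 (hj (Fin.last K)))
      (sub_nonneg.2 (hwsorted j _ (Fin.le_last j)))]
  · exact sub_nonneg.2 (mul_le_one₀ (hg _).2 (hw k).1 (hw k).2)

lemma prod_sorted_le {m : ℕ} (g : Fin m → ℝ) (hg : ∀ i, g i ∈ Set.Icc (0 : ℝ) 1)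
    (hgsorted : ∀ i j : Fin m, i ≤ j → g j ≤ g i) (K : ℕ) (hKm : K ≤ m) (w : Fin K → ℝ)
    (hw : ∀ k, w k ∈ Set.Icc (0 : ℝ) 1) (hwsorted : ∀ i j : Fin K, i ≤ j → w j ≤ w i)
    (σ : Fin K → Fin m) (hσ : Function.Injective σ) :
    ∏ k : Fin K, (1 - g (Fin.castLE hKm k) * w k) ≤ ∏ k : Fin K, (1 - g (σ k) * w k) := by
  induction K with
  | zero => simp
  | succ K ih =>
    obtain ⟨j, hj⟩ := Finite.exists_max σ
    have hjK : K ≤ (σ j : ℕ) := by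
      by_contra! hlt
      have hlt' : ∀ k, (σ k : ℕ) < K := fun k => lt_of_le_of_lt (hj k) hlt
      have hinj : Function.Injective (fun k => (⟨σ k, hlt' k⟩ : Fin K)) := fun a b hab =>
        hσ (Fin.ext (by simpa using hab))
      have := Fintype.card_le_of_injective _ hinj
      simp at this
    refine le_trans ?_ (prod_swap_last_le g w hg hw hwsorted σ j fun k => hgsorted _ _ (hj k))
    rw [Fin.prod_univ_castSucc, Fin.prod_univ_castSucc, Equiv.swap_apply_right]
    have hnonneg : ∀ i k, 0 ≤ 1 - g i * w k := fun i k =>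
      sub_nonneg.2 (mul_le_one₀ (hg i).2 (hw k).1 (hw k).2)
    refine mul_le_mul ?_ ?_ (hnonneg _ _) (prod_nonneg fun k _ => hnonneg _ _)
    · exact ih (by omega) (fun k => w k.castSucc) (fun k => hw _)
        (fun a b hab => hwsorted _ _ (by simpa using hab))
        (fun k => σ (Equiv.swap j (Fin.last K) k.castSucc))
        (hσ.comp ((Equiv.injective _).comp (Fin.castSucc_injective K)))
    · exact sub_le_sub_left (mul_le_mul_of_nonneg_right
        (hgsorted _ _ (Fin.le_def.2 (by simpa using hjK))) (hw _).1) _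

/-- Lemma 1 of the paper: placing the item with the `k`-th largest attractiveness
at the `k`-th slot maximizes the probability that at least one slot is clicked. -/
theorem stmt_0 (m K : ℕ) (hK : 1 ≤ K) (hKm : K ≤ m)
    (g : Fin m → ℝ) (w : Fin K → ℝ)
    (hg : ∀ i, g i ∈ Set.Icc (0 : ℝ) 1)
    (hw : ∀ k, w k ∈ Set.Icc (0 : ℝ) 1)
    (hgsorted : ∀ i j : Fin m, i ≤ j → g j ≤ g i)
    (hwsorted : ∀ i j : Fin K, i ≤ j → w j ≤ w i)
    (σ : Fin K → Fin m) (hσ : Function.Injective σ) :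
    1 - ∏ k : Fin K, (1 - g (σ k) * w k) ≤
      1 - ∏ k : Fin K, (1 - g (Fin.castLE hKm k) * w k) :=
  sub_le_sub_left (prod_sorted_le g hg hgsorted K hKm w hw hwsorted σ hσ) 1
end

section
/- Let $K \geq 1$, let $x_1 \geq x_2 \geq \dots \geq x_K$ and $y_1 \geq y_2 \geq \dots \geq y_K$ be real numbers in $[0,1]$. Then for every permutation $\sigma$ of $\{1,\dots,K\}$ one has $\prod_{k=1}^{K}\bigl(1 - x_{\sigma(k)} y_k\bigr) \geq \prod_{k=1}^{K}\bigl(1 - x_k y_k\bigr)$. -/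
/-!
If some factor `1 - x k * y k` vanishes, the left side is `0` and the right side is nonnegative.
Otherwise every product `x i * y j` is `< 1`, so logarithms may be taken and expanded as
`-log (1 - u) = ∑ u ^ (n + 1) / (n + 1)`. Since `x ^ (n + 1)` and `y ^ (n + 1)` are again similarly
ordered, the classical rearrangement inequality compares the two series term by term.
-/

open Finset

/-- The product-form rearrangement inequality inside Lemma 1: among all permutations
pairing two similarly ordered sequences in `[0,1]`, the aligned pairing minimizes
`∏ (1 - x_{σ(k)} y_k)`. -/
theorem stmt_1 (K : ℕ) (hK : 1 ≤ K)
    (x y : Fin K → ℝ)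
    (hx : ∀ k, x k ∈ Set.Icc (0 : ℝ) 1)
    (hy : ∀ k, y k ∈ Set.Icc (0 : ℝ) 1)
    (hxsorted : ∀ i j : Fin K, i ≤ j → x j ≤ x i)
    (hysorted : ∀ i j : Fin K, i ≤ j → y j ≤ y i)
    (σ : Equiv.Perm (Fin K)) :
    ∏ k : Fin K, (1 - x k * y k) ≤ ∏ k : Fin K, (1 - x (σ k) * y k) := by
  have hle (i j : Fin K) : x i * y j ≤ 1 := mul_le_one₀ (hx i).2 (hy j).1 (hy j).2
  have hnonneg : 0 ≤ ∏ k, (1 - x (σ k) * y k) :=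
    prod_nonneg fun k _ => sub_nonneg.2 (hle _ _)
  by_cases hone : ∃ k, x k * y k = 1
  · obtain ⟨k, hk⟩ := hone
    rwa [prod_eq_zero (mem_univ k) (by rw [hk, sub_self])]
  push Not at hone
  -- Both factors only grow when the indices are replaced by `min i j`.
  have hlt (i j : Fin K) : x i * y j < 1 :=
    (mul_le_mul (hxsorted _ _ (min_le_left i j)) (hysorted _ _ (min_le_right i j))
      (hy _).1 (hx _).1).trans_lt ((hle _ _).lt_of_ne (hone (min i j)))
  have hpos (i j : Fin K) : 0 < 1 - x i * y j := sub_pos.2 (hlt i j)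
  have hseries (τ : Equiv.Perm (Fin K)) :
      HasSum (fun n : ℕ => ∑ k, (x (τ k) * y k) ^ (n + 1) / ((n : ℝ) + 1))
        (∑ k, -Real.log (1 - x (τ k) * y k)) :=
    hasSum_sum fun k _ => Real.hasSum_pow_div_log_of_abs_lt_one <| by
      rw [abs_of_nonneg (mul_nonneg (hx _).1 (hy _).1)]
      exact hlt _ _
  have hterm (n : ℕ) : ∑ k, (x (σ k) * y k) ^ (n + 1) / ((n : ℝ) + 1) ≤
      ∑ k, (x k * y k) ^ (n + 1) / ((n : ℝ) + 1) := by
    have hxn : Antitone fun k => x k ^ (n + 1) := fun i j hij =>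
      pow_le_pow_left₀ (hx j).1 (hxsorted i j hij) _
    have hyn : Antitone fun k => y k ^ (n + 1) := fun i j hij =>
      pow_le_pow_left₀ (hy j).1 (hysorted i j hij) _
    have hr := (hxn.monovary hyn).sum_comp_perm_mul_le_sum_mul (σ := σ)
    simp only [← sum_div, mul_pow]
    gcongr
  have hlog := hasSum_le hterm (hseries σ) (hseries 1)
  simp only [sum_neg_distrib, neg_le_neg_iff, Equiv.Perm.one_apply] at hlog
  rw [← Real.log_prod fun k _ => (hpos _ _).ne', ← Real.log_prod fun k _ => (hpos _ _).ne'] at hlog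
  exact (Real.log_le_log_iff (prod_pos fun k _ => hpos _ _) (prod_pos fun k _ => hpos _ _)).1 hlog
end

section
/- Let $d, T, K \geq 1$ be integers and let $\lambda, \phi' \in \mathbb{R}$ with $1 \leq \phi' \leq \lambda$. For each $t \in \{1,\dots,T\}$ and $k \in \{1,\dots,K\}$ let $x_{t,k} \in \mathbb{R}^d$ with $\|x_{t,k}\|_2 \leq 1$ and let $w_{t,k} \in [0,1]$ satisfy $\sum_{k=1}^{K} w_{t,k}^2 \leq \phi'$ for every $t$. Define the symmetric positive definite matrices $A_0 = \lambda I_d$ and $A_t = A_{t-1} + \sum_{k=1}^{K} w_{t,k}^2\, x_{t,k} x_{t,k}^{\top}$ for $t \geq 1$. Then $\sum_{t=1}^{T} \sum_{k=1}^{K} w_{t,k} \sqrt{x_{t,k}^{\top} A_{t-1}^{-1} x_{t,k}} \leq \sqrt{2 T K d \ln\bigl(1 + \tfrac{\phi' T}{\lambda d}\bigr)}$. -/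
/-!
The argument is the elliptical-potential method, with the log-determinant `log det A_t` as potential.

In round `t` put `s_t = ∑ k, w_{t,k}² x_{t,k}ᵀ A_{t-1}⁻¹ x_{t,k}`. Writing the update as
`A_t = A_{t-1} + X Xᵀ`, where the columns of `X` are `w_{t,k} x_{t,k}`, Sylvester's identity gives
`det A_t = det A_{t-1} · det (1 + Xᵀ A_{t-1}⁻¹ X)`, and `det (1 + M) ≥ 1 + tr M` for positive
semidefinite `M` yields `det A_t ≥ det A_{t-1} (1 + s_t)` (`det_mul_one_add_le_det_add`). Since
`A_{t-1} ≥ λ I`, each quadratic form is at most `1 / λ` (`mul_dotProduct_inv_mulVec_le`), hence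
`s_t ≤ φ' / λ ≤ 1` and `s_t ≤ 2 log (1 + s_t)`. The potential telescopes, and its final value is at
most `d log (λ + φ' T / d)` by concavity of `log` and the trace bound `tr A_T ≤ λ d + φ' T`
(`log_det_le`). Thus `∑ t, s_t ≤ 2 d log (1 + φ' T / (λ d))`, and the claim follows from
Cauchy–Schwarz over the `T K` pairs `(t, k)`.
-/

open Finset Matrix Real

theorem one_add_sum_le_prod_one_add_real {ι : Type*} (s : Finset ι) (f : ι → ℝ)
    (hf : ∀ i, 0 ≤ f i) : 1 + ∑ i ∈ s, f i ≤ ∏ i ∈ s, (1 + f i) := by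
  classical
  induction s using Finset.induction_on with
  | empty => simp
  | insert a s ha ih =>
    rw [Finset.sum_insert ha, Finset.prod_insert ha]
    have h1 := hf a
    have h2 : 0 ≤ ∑ i ∈ s, f i := Finset.sum_nonneg fun i _ => hf i
    nlinarith [mul_nonneg h1 h2, mul_le_mul_of_nonneg_left ih (by linarith : 0 ≤ 1 + f a)]

/-- In terms of the eigenvalues `μ i ≥ 0` of `M` this is `1 + ∑ μ i ≤ ∏ (1 + μ i)`. -/
theorem one_add_trace_le_det_one_add {n : ℕ} {M : Matrix (Fin n) (Fin n) ℝ}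
    (hM : M.PosSemidef) : 1 + M.trace ≤ (1 + M).det := by
  have hdet : (1 + M).det = ∏ i, (1 + hM.1.eigenvalues i) := by
    -- evaluate the characteristic polynomial at `-1` and cancel the signs
    have h1 : M.charpoly.eval (-1) = (-1) ^ n * (1 + M).det := by
      rw [Matrix.eval_charpoly, show Matrix.scalar (Fin n) (-1 : ℝ) - M = -(1 + M) by
        rw [map_neg, map_one]; abel, Matrix.det_neg, Fintype.card_fin]
    have h2 : M.charpoly.eval (-1) = (-1) ^ n * ∏ i, (1 + hM.1.eigenvalues i) := by
      rw [hM.1.charpoly_eq, Polynomial.eval_prod]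
      have : ∀ i, Polynomial.eval (-1 : ℝ) (Polynomial.X - Polynomial.C
          ((hM.1.eigenvalues i : ℝ))) = (-1) * (1 + hM.1.eigenvalues i) := by
        intro i
        simp only [Polynomial.eval_sub, Polynomial.eval_X, Polynomial.eval_C]
        ring
      simp only [RCLike.ofReal_real_eq_id, id_eq, this, Finset.prod_mul_distrib,
        Finset.prod_const, Finset.card_univ, Fintype.card_fin]
    exact mul_left_cancel₀ (pow_ne_zero n (by norm_num)) (h1.symm.trans h2)
  have htr : M.trace = ∑ i, hM.1.eigenvalues i := by
    simpa using hM.1.trace_eq_sum_eigenvalues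
  rw [hdet, htr]
  exact one_add_sum_le_prod_one_add_real _ _ hM.eigenvalues_nonneg

/-- The matrix determinant lemma for a weighted update of arbitrary rank, as an inequality. -/
theorem det_mul_one_add_le_det_add {d K : ℕ} {A : Matrix (Fin d) (Fin d) ℝ} (hA : A.PosDef)
    (x : Fin K → Fin d → ℝ) (w : Fin K → ℝ) :
    A.det * (1 + ∑ k, w k ^ 2 * (x k ⬝ᵥ (A⁻¹ *ᵥ x k))) ≤
      (A + ∑ k, w k ^ 2 • vecMulVec (x k) (x k)).det := by
  let X : Matrix (Fin d) (Fin K) ℝ := Matrix.of fun i k => w k * x k i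
  have hX : ∑ k, w k ^ 2 • vecMulVec (x k) (x k) = X * Xᵀ := by
    ext i j
    simp only [Matrix.sum_apply, Matrix.smul_apply, vecMulVec_apply, Matrix.mul_apply, X,
      Matrix.transpose_apply, Matrix.of_apply, smul_eq_mul]
    exact Finset.sum_congr rfl fun k _ => by ring
  have hunit : IsUnit A.det := hA.det_pos.ne'.isUnit
  have hfac : A + X * Xᵀ = A * (1 + (A⁻¹ * X) * Xᵀ) := by
    rw [mul_add, mul_one, Matrix.mul_assoc, Matrix.mul_nonsing_inv_cancel_left _ _ hunit]
  have hpsd : (Xᵀ * (A⁻¹ * X)).PosSemidef := by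
    have := hA.inv.posSemidef.conjTranspose_mul_mul_same X
    rwa [conjTranspose_eq_transpose_of_trivial, Matrix.mul_assoc] at this
  have htr : (Xᵀ * (A⁻¹ * X)).trace = ∑ k, w k ^ 2 * (x k ⬝ᵥ (A⁻¹ *ᵥ x k)) := by
    simp only [Matrix.trace, Matrix.diag_apply, Matrix.mul_apply, X, Matrix.transpose_apply,
      Matrix.of_apply, dotProduct, mulVec, Finset.mul_sum]
    exact Finset.sum_congr rfl fun k _ => Finset.sum_congr rfl fun i _ =>
      Finset.sum_congr rfl fun j _ => by ring
  rw [hX, hfac, Matrix.det_mul, Matrix.det_one_add_mul_comm, ← htr]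
  exact mul_le_mul_of_nonneg_left (one_add_trace_le_det_one_add hpsd) hA.det_pos.le

/-- If `A ≥ c I` with `c > 0`, then `xᵀ A⁻¹ x ≤ ‖x‖² / c`. -/
theorem mul_dotProduct_inv_mulVec_le {d : ℕ} {A : Matrix (Fin d) (Fin d) ℝ} (hA : A.PosDef)
    {c : ℝ} (hc : 0 < c) (hAc : (A - c • (1 : Matrix (Fin d) (Fin d) ℝ)).PosSemidef)
    (x : Fin d → ℝ) : c * (x ⬝ᵥ (A⁻¹ *ᵥ x)) ≤ x ⬝ᵥ x := by
  have hunit : IsUnit A.det := hA.det_pos.ne'.isUnit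
  set y := A⁻¹ *ᵥ x with hy
  have hAy : A *ᵥ y = x := by
    rw [hy, Matrix.mulVec_mulVec, Matrix.mul_nonsing_inv _ hunit, Matrix.one_mulVec]
  have h1 : c * (y ⬝ᵥ y) ≤ x ⬝ᵥ y := by
    have := hAc.dotProduct_mulVec_nonneg y
    rw [Matrix.sub_mulVec, hAy, Matrix.smul_mulVec, Matrix.one_mulVec, star_trivial,
      dotProduct_sub, dotProduct_smul, smul_eq_mul, dotProduct_comm y x] at this
    linarith
  have h2 : 0 ≤ (x - c • y) ⬝ᵥ (x - c • y) := by
    simpa using dotProduct_star_self_nonneg (x - c • y)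
  simp only [sub_dotProduct, dotProduct_sub, smul_dotProduct, dotProduct_smul, smul_eq_mul,
    dotProduct_comm y x] at h2
  nlinarith [mul_le_mul_of_nonneg_left h1 hc.le]

/-- The AM–GM bound `det A ≤ (tr A / d) ^ d` in logarithmic form, with any `c ≥ tr A / d` in place
of the mean eigenvalue. -/
theorem log_det_le {d : ℕ} {A : Matrix (Fin d) (Fin d) ℝ} (hA : A.PosDef)
    {c : ℝ} (hc : 0 < c) (htr : A.trace ≤ c * d) : Real.log A.det ≤ d * Real.log c := by
  have hdet : A.det = ∏ i, hA.1.eigenvalues i := by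
    simpa using hA.1.det_eq_prod_eigenvalues
  have htr' : A.trace = ∑ i, hA.1.eigenvalues i := by
    simpa using hA.1.trace_eq_sum_eigenvalues
  rw [hdet, Real.log_prod fun i _ => (hA.eigenvalues_pos i).ne']
  have h : ∀ i, Real.log (hA.1.eigenvalues i) ≤ hA.1.eigenvalues i / c - 1 + Real.log c := by
    intro i
    -- the tangent line of `log` at `c` lies above its graph
    have h1 := Real.log_le_sub_one_of_pos (div_pos (hA.eigenvalues_pos i) hc)
    rw [Real.log_div (hA.eigenvalues_pos i).ne' hc.ne'] at h1
    linarith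
  calc ∑ i, Real.log (hA.1.eigenvalues i)
      ≤ ∑ i, (hA.1.eigenvalues i / c - 1 + Real.log c) := Finset.sum_le_sum fun i _ => h i
    _ = A.trace / c - d + d * Real.log c := by
        rw [htr', Finset.sum_add_distrib, Finset.sum_sub_distrib, Finset.sum_div]
        simp
    _ ≤ d * Real.log c := by
        have : A.trace / c ≤ d := by rw [div_le_iff₀ hc]; linarith
        linarith

theorem le_two_mul_log_one_add {s : ℝ} (h0 : 0 ≤ s) (h1 : s ≤ 1) :
    s ≤ 2 * Real.log (1 + s) := by
  have h := Real.le_log_one_add_of_nonneg h0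
  have h2 : s / 2 ≤ 2 * s / (s + 2) := by
    rw [div_le_div_iff₀ (by norm_num) (by linarith)]
    nlinarith
  linarith

/-- Lemma 4 of the paper's appendix: the weighted elliptical-potential bound on the
cumulative confidence widths of the UBM-LinUCB algorithm.  Here `A ↑t` (for `t : Fin T`)
is the design matrix `A_{t-1}` available at the beginning of round `t`. -/
theorem stmt_5 (d T K : ℕ) (hd : 1 ≤ d) (hT : 1 ≤ T) (hK : 1 ≤ K)
    (lam phi : ℝ) (hphi : 1 ≤ phi) (hlam : phi ≤ lam)
    (x : Fin T → Fin K → (Fin d → ℝ))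
    (hx : ∀ t k, Real.sqrt (x t k ⬝ᵥ x t k) ≤ 1)
    (w : Fin T → Fin K → ℝ)
    (hw : ∀ t k, w t k ∈ Set.Icc (0 : ℝ) 1)
    (hwsum : ∀ t, ∑ k : Fin K, (w t k) ^ 2 ≤ phi)
    (A : ℕ → Matrix (Fin d) (Fin d) ℝ)
    (hA0 : A 0 = lam • (1 : Matrix (Fin d) (Fin d) ℝ))
    (hAt : ∀ t : Fin T,
      A (t + 1) = A t + ∑ k : Fin K, (w t k) ^ 2 • vecMulVec (x t k) (x t k)) :
    ∑ t : Fin T, ∑ k : Fin K, w t k * Real.sqrt (x t k ⬝ᵥ ((A t)⁻¹ *ᵥ x t k)) ≤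
      Real.sqrt (2 * T * K * d * Real.log (1 + phi * T / (lam * d))) := by
  have hlam0 : 0 < lam := by linarith
  have hd0 : (0 : ℝ) < d := by exact_mod_cast hd
  have hx1 : ∀ t k, x t k ⬝ᵥ x t k ≤ 1 := fun t k => by
    simpa using (Real.sqrt_le_left zero_le_one).1 (hx t k)
  have hpsd : ∀ n, n ≤ T → (A n - lam • (1 : Matrix (Fin d) (Fin d) ℝ)).PosSemidef := by
    intro n
    induction n with
    | zero => intro _; rw [hA0, sub_self]; exact PosSemidef.zero
    | succ n ih =>
      intro hn
      have hstep := hAt ⟨n, hn⟩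
      simp only at hstep
      rw [hstep, add_sub_right_comm]
      refine (ih (by omega)).add (posSemidef_sum _ fun k _ => ?_)
      have := posSemidef_vecMulVec_self_star (x ⟨n, hn⟩ k)
      rw [star_trivial] at this
      exact this.smul (sq_nonneg _)
  have hpd : ∀ n, n ≤ T → (A n).PosDef := by
    intro n hn
    have h1 : (lam • (1 : Matrix (Fin d) (Fin d) ℝ)).PosDef := PosDef.one.smul hlam0
    have := h1.add_posSemidef (hpsd n hn)
    rwa [add_sub_cancel] at this
  have htrace : ∀ n, n ≤ T → (A n).trace ≤ lam * d + n * phi := by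
    intro n
    induction n with
    | zero => intro _; rw [hA0]; simp
    | succ n ih =>
      intro hn
      have hstep := hAt ⟨n, hn⟩
      simp only at hstep
      rw [hstep, Matrix.trace_add, Matrix.trace_sum]
      have h1 : ∑ k, (w ⟨n, hn⟩ k ^ 2 • vecMulVec (x ⟨n, hn⟩ k) (x ⟨n, hn⟩ k)).trace ≤ phi := by
        refine le_trans (Finset.sum_le_sum fun k _ => ?_) (hwsum ⟨n, hn⟩)
        rw [Matrix.trace_smul, Matrix.trace_vecMulVec, smul_eq_mul]
        exact mul_le_of_le_one_right (sq_nonneg _) (hx1 _ _)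
      have h2 := ih (by omega)
      push_cast
      linarith
  have hq0 : ∀ t : Fin T, ∀ k, 0 ≤ x t k ⬝ᵥ ((A t)⁻¹ *ᵥ x t k) := fun t k => by
    simpa using (hpd t t.2.le).inv.posSemidef.dotProduct_mulVec_nonneg (x t k)
  have hround : ∀ t : Fin T, ∑ k, w t k ^ 2 * (x t k ⬝ᵥ ((A t)⁻¹ *ᵥ x t k)) ≤
      2 * (Real.log (A (t + 1)).det - Real.log (A t).det) := by
    intro t
    have hs0 : 0 ≤ ∑ k, w t k ^ 2 * (x t k ⬝ᵥ ((A t)⁻¹ *ᵥ x t k)) :=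
      Finset.sum_nonneg fun k _ => mul_nonneg (sq_nonneg _) (hq0 t k)
    have hs1 : ∑ k, w t k ^ 2 * (x t k ⬝ᵥ ((A t)⁻¹ *ᵥ x t k)) ≤ 1 := by
      have h : lam * ∑ k, w t k ^ 2 * (x t k ⬝ᵥ ((A t)⁻¹ *ᵥ x t k)) ≤ lam * 1 := by
        rw [Finset.mul_sum, mul_one]
        refine le_trans (Finset.sum_le_sum fun k _ => ?_) ((hwsum t).trans hlam)
        have h1 := (mul_dotProduct_inv_mulVec_le (hpd t t.2.le) hlam0 (hpsd t t.2.le)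
          (x t k)).trans (hx1 t k)
        rw [mul_left_comm]
        exact mul_le_of_le_one_right (sq_nonneg _) h1
      exact le_of_mul_le_mul_left h hlam0
    have hdet := det_mul_one_add_le_det_add (hpd t t.2.le) (x t) (w t)
    rw [← hAt t] at hdet
    have hdpos := (hpd t t.2.le).det_pos
    have hlog := Real.log_le_log (mul_pos hdpos (by linarith)) hdet
    rw [Real.log_mul hdpos.ne' (by linarith)] at hlog
    have := le_two_mul_log_one_add hs0 hs1
    linarith
  have htotal : ∑ t : Fin T, ∑ k, w t k ^ 2 * (x t k ⬝ᵥ ((A t)⁻¹ *ᵥ x t k)) ≤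
      2 * (d * Real.log (1 + phi * T / (lam * d))) := by
    have hfrac : 0 ≤ phi * T / (lam * d) := by positivity
    have hc : 0 < 1 + phi * T / (lam * d) := by linarith
    have hend := log_det_le (hpd T le_rfl) (mul_pos hlam0 hc) (by
      refine (htrace T le_rfl).trans (le_of_eq ?_)
      field_simp)
    have hstart : Real.log (A 0).det = d * Real.log lam := by
      rw [hA0, Matrix.det_smul, Matrix.det_one, mul_one, Fintype.card_fin, Real.log_pow]
    rw [Real.log_mul hlam0.ne' hc.ne'] at hend
    calc _ ≤ ∑ t : Fin T, 2 * (Real.log (A (t + 1)).det - Real.log (A t).det) :=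
          Finset.sum_le_sum fun t _ => hround t
      _ = 2 * (Real.log (A T).det - Real.log (A 0).det) := by
          rw [← Finset.mul_sum, Fin.sum_univ_eq_sum_range
            (fun n => Real.log (A (n + 1)).det - Real.log (A n).det),
            Finset.sum_range_sub (fun n => Real.log (A n).det)]
      _ ≤ _ := by rw [hstart]; linarith
  apply Real.le_sqrt_of_sq_le
  calc (∑ t : Fin T, ∑ k, w t k * Real.sqrt (x t k ⬝ᵥ ((A t)⁻¹ *ᵥ x t k))) ^ 2
      ≤ T * ∑ t : Fin T, (∑ k, w t k * Real.sqrt (x t k ⬝ᵥ ((A t)⁻¹ *ᵥ x t k))) ^ 2 := by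
        simpa using sq_sum_le_card_mul_sum_sq (s := (Finset.univ : Finset (Fin T)))
          (f := fun t => ∑ k, w t k * Real.sqrt (x t k ⬝ᵥ ((A t)⁻¹ *ᵥ x t k)))
    _ ≤ T * ∑ t : Fin T, (K * ∑ k, w t k ^ 2 * (x t k ⬝ᵥ ((A t)⁻¹ *ᵥ x t k))) := by
        gcongr with t _
        have h := sq_sum_le_card_mul_sum_sq (s := (Finset.univ : Finset (Fin K)))
          (f := fun k => w t k * Real.sqrt (x t k ⬝ᵥ ((A t)⁻¹ *ᵥ x t k)))
        simpa only [mul_pow, Real.sq_sqrt (hq0 t _), Finset.card_univ, Fintype.card_fin] using h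
    _ ≤ T * (K * (2 * (d * Real.log (1 + phi * T / (lam * d))))) := by
        rw [← Finset.mul_sum]
        gcongr
    _ = 2 * T * K * d * Real.log (1 + phi * T / (lam * d)) := by ring
end

section
/- Let $d \geq 1$, let $A$ be a real symmetric positive definite $d \times d$ matrix, let $\theta, \theta^* \in \mathbb{R}^d$, let $\alpha \geq 0$, let $K \geq 1$, and let $\mathcal{D} \subseteq \mathbb{R}^d$ be a finite set with $|\mathcal{D}| \geq K$ such that $|\langle x, \theta^* - \theta\rangle| \leq \alpha \sqrt{x^{\top} A^{-1} x}$ for every $x \in \mathcal{D}$. Let $a_1,\dots,a_K \in \mathcal{D}$ be chosen greedily by the upper confidence index: for each $k$, $a_k$ maximizes $x \mapsto \langle \theta, x\rangle + \alpha\sqrt{x^{\top}A^{-1}x}$ over $\mathcal{D} \setminus \{a_1,\dots,a_{k-1}\}$. Let $a^*_1,\dots,a^*_K \in \mathcal{D}$ be distinct elements with the $K$ largest values of $\langle \theta^*, \cdot\rangle$, ordered so that $\langle\theta^*,a^*_1\rangle \geq \dots \geq \langle\theta^*,a^*_K\rangle$ and $\langle\theta^*,a^*_k\rangle \geq \langle\theta^*,x\rangle$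 for every $x \in \mathcal{D}\setminus\{a^*_1,\dots,a^*_k\}$. Then for every $k \in \{1,\dots,K\}$: $\langle \theta^*, a^*_k\rangle - \langle \theta^*, a_k\rangle \leq 2\alpha \sqrt{a_k^{\top} A^{-1} a_k}$. -/
open Finset Matrix

/-!
Among the `k + 1` best arms `astar j`, `j ≤ k`, at least one, say `astar m`, is not among the `k`
arms selected before step `k`. It is therefore a competitor at step `k`, so its upper confidence
bound is at most that of `a k`. Its true value is at least that of `astar k` and at most its upper
confidence bound, while the upper confidence bound of `a k` exceeds the true value of `a k` by at
most twice the confidence width.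
-/

/-- Top-`K` optimism lemma from the proof of Theorem 1: on the confidence event, the gap
between the `k`-th best arm's true value and the `k`-th greedily selected arm's true
value is at most twice the selected arm's confidence width. -/
theorem stmt_10 (d : ℕ) (hd : 1 ≤ d)
    (A : Matrix (Fin d) (Fin d) ℝ) (hA : A.PosDef)
    (θ θstar : Fin d → ℝ) (α : ℝ) (hα : 0 ≤ α)
    (K : ℕ) (hK : 1 ≤ K)
    (D : Finset (Fin d → ℝ)) (hDcard : K ≤ D.card)
    (hconf : ∀ x ∈ D, |x ⬝ᵥ (θstar - θ)| ≤ α * Real.sqrt (x ⬝ᵥ (A⁻¹ *ᵥ x)))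
    -- the greedily selected arms `a 0, …, a (K-1)`
    (a : Fin K → (Fin d → ℝ))
    (haD : ∀ k, a k ∈ D)
    (haInj : Function.Injective a)
    (haGreedy : ∀ k : Fin K, ∀ x ∈ D, (∀ j : Fin K, j < k → a j ≠ x) →
      θ ⬝ᵥ x + α * Real.sqrt (x ⬝ᵥ (A⁻¹ *ᵥ x)) ≤
        θ ⬝ᵥ (a k) + α * Real.sqrt (a k ⬝ᵥ (A⁻¹ *ᵥ a k)))
    -- the distinct arms `astar 0, …, astar (K-1)` with the `K` largest true values,
    -- ordered decreasingly
    (astar : Fin K → (Fin d → ℝ))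
    (hastarD : ∀ k, astar k ∈ D)
    (hastarInj : Function.Injective astar)
    (hastarSorted : ∀ j k : Fin K, j ≤ k → θstar ⬝ᵥ astar k ≤ θstar ⬝ᵥ astar j)
    (hastarTop : ∀ k : Fin K, ∀ x ∈ D, (∀ j : Fin K, j ≤ k → astar j ≠ x) →
      θstar ⬝ᵥ x ≤ θstar ⬝ᵥ astar k) :
    ∀ k : Fin K,
      θstar ⬝ᵥ astar k - θstar ⬝ᵥ a k ≤ 2 * α * Real.sqrt (a k ⬝ᵥ (A⁻¹ *ᵥ a k)) := by
  intro k
  -- Pigeonhole: `k + 1` distinct best arms cannot all lie among the `k` arms chosen earlier.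
  obtain ⟨m, hmk, hm⟩ : ∃ m : Fin K, m ≤ k ∧ ∀ j : Fin K, j < k → a j ≠ astar m := by
    by_contra! h
    have hsub : (Finset.Iic k).image astar ⊆ (Finset.Iio k).image a := by
      intro x hx
      obtain ⟨m, hm, rfl⟩ := Finset.mem_image.1 hx
      obtain ⟨j, hj, hja⟩ := h m (Finset.mem_Iic.1 hm)
      exact Finset.mem_image.2 ⟨j, Finset.mem_Iio.2 hj, hja⟩
    have hcard := Finset.card_le_card hsub
    rw [Finset.card_image_of_injective _ hastarInj, Finset.card_image_of_injective _ haInj,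
      Fin.card_Iic, Fin.card_Iio] at hcard
    omega
  have hsorted := hastarSorted m k hmk
  have hgreedy := haGreedy k (astar m) (hastarD m) hm
  have hconf_m := (abs_le.1 (hconf (astar m) (hastarD m))).2
  have hconf_k := (abs_le.1 (hconf (a k) (haD k))).1
  rw [dotProduct_sub, dotProduct_comm _ θstar, dotProduct_comm _ θ] at hconf_m hconf_k
  linarith
end

section
/- Let $\mathcal{A}$ be a finite set of arms, $K \geq 1$, and let the set of slates be the injective maps $s \colon \{1,\dots,K\} \to \mathcal{A}$. Let $\pi$ and $\Phi$ be probability mass functions on slates, let $\gamma \colon \mathcal{A} \to \mathbb{R}$, let $w_{k,k'} \geq 0$ for $1 \leq k \leq K$ and $0 \leq k' \leq k-1$, and for each slate $s$ and each $k$ let $q_s(k,\cdot)$ be a probability mass function on $\{0,1,\dots,k-1\}$ (the distribution of the position of the last click before slot $k$). For a pmf $P$ on slates define the marginal $P(a,k,k') = \sum_{s} P(s)\,\mathbf{1}\{s(k)=a\}\, q_s(k,k')$ and $\langle \tilde W, P(a,\cdot,\cdot)\rangle = \sum_{k=1}^{K}\sum_{k'=0}^{k-1} w_{k,k'} P(a,k,k')$.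 Assume $\langle \tilde W, \pi(a,\cdot,\cdot)\rangle > 0$ for every arm $a$. Then $\sum_{s} \pi(s) \sum_{k=1}^{K}\sum_{k'=0}^{k-1} q_s(k,k')\, \gamma(s(k))\, w_{k,k'} \cdot \frac{\langle \tilde W, \Phi(s(k),\cdot,\cdot)\rangle}{\langle \tilde W, \pi(s(k),\cdot,\cdot)\rangle} = \sum_{s} \Phi(s) \sum_{k=1}^{K}\sum_{k'=0}^{k-1} q_s(k,k')\, \gamma(s(k))\, w_{k,k'}$. -/
/-!
The expected reward under a slate distribution `P`, when a slot showing arm `a` pays `f a * w k k'`,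
equals `∑ a, f a * wdot w P q a` (`sum_reward_eq_sum_wdot`). Both sides of the unbiasedness identity
have this form, with `f = γ * (wdot w Φ q / wdot w π q)` under `π` and `f = γ` under `Φ`; on the left
the factor `wdot w π q a` cancels against the denominator, which is positive.
-/

open Finset

/-- A slate: an injective assignment of arms to the `K` display slots. -/
abbrev Slate (A : Type*) (K : ℕ) := {s : Fin K → A // Function.Injective s}

/-- The UBM-weighted placement marginal `⟨W̃, P(a,·,·)⟩ = ∑_{k,k'} w_{k,k'} P(a,k,k')`,
where `P(a,k,k') = ∑_s P(s) 𝟙{s(k) = a} q_s(k,k')` is the probability under the slate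
distribution `P` that arm `a` is displayed at slot `k` with last click before `k` at
position `k'` (slot `k : Fin K` is the `(k+1)`-st slot; `k' : Fin (k+1)` with `k' = 0`
meaning no previous click). -/
def wdot {A : Type*} [Fintype A] [DecidableEq A] {K : ℕ}
    (w : (k : Fin K) → Fin (k.1 + 1) → ℝ)
    (P : Slate A K → ℝ)
    (q : Slate A K → (k : Fin K) → Fin (k.1 + 1) → ℝ)
    (a : A) : ℝ :=
  ∑ k : Fin K, ∑ k' : Fin (k.1 + 1),
    w k k' * ∑ s : Slate A K, P s * (if s.1 k = a then 1 else 0) * q s k k'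

/-- Grouping slots by the displayed arm: the expected reward under `P`, for a reward `f a * w k k'`,
depends on `P` only through the marginals `wdot w P q`. -/
lemma sum_reward_eq_sum_wdot {A : Type*} [Fintype A] [DecidableEq A] {K : ℕ}
    (w : (k : Fin K) → Fin (k.1 + 1) → ℝ) (P : Slate A K → ℝ)
    (q : Slate A K → (k : Fin K) → Fin (k.1 + 1) → ℝ) (f : A → ℝ) :
    ∑ s : Slate A K, P s * ∑ k : Fin K, ∑ k' : Fin (k.1 + 1),
        q s k k' * (f (s.1 k) * w k k') = ∑ a, f a * wdot w P q a := by
  simp only [wdot, mul_sum]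
  rw [sum_comm, sum_comm (s := (univ : Finset A))]
  refine sum_congr rfl fun k _ => ?_
  rw [sum_comm, sum_comm (s := (univ : Finset A))]
  refine sum_congr rfl fun k' _ => ?_
  rw [sum_comm (s := (univ : Finset A))]
  refine sum_congr rfl fun s _ => ?_
  rw [sum_eq_single (s.1 k)]
  · rw [if_pos rfl]; ring
  · intro a _ ha
    rw [if_neg ha.symm]; ring
  · simp

/-- Unbiasedness identity of the UBM-IPS estimator (paper's appendix): the
IPS-weighted expected reward under the logging policy `π` equals the expected
reward under the target policy `Φ`. -/
theorem stmt_13 (A : Type*) [Fintype A] [DecidableEq A] (K : ℕ) (hK : 1 ≤ K)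
    (π Φ : Slate A K → ℝ)
    (hπ0 : ∀ s, 0 ≤ π s) (hπ1 : ∑ s : Slate A K, π s = 1)
    (hΦ0 : ∀ s, 0 ≤ Φ s) (hΦ1 : ∑ s : Slate A K, Φ s = 1)
    (γ : A → ℝ)
    (w : (k : Fin K) → Fin (k.1 + 1) → ℝ) (hw : ∀ k k', 0 ≤ w k k')
    (q : Slate A K → (k : Fin K) → Fin (k.1 + 1) → ℝ)
    (hq0 : ∀ s k k', 0 ≤ q s k k') (hq1 : ∀ s k, ∑ k' : Fin (k.1 + 1), q s k k' = 1)
    (hpos : ∀ a : A, 0 < wdot w π q a) :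
    ∑ s : Slate A K, π s * ∑ k : Fin K, ∑ k' : Fin (k.1 + 1),
        q s k k' * (γ (s.1 k) * w k k') * (wdot w Φ q (s.1 k) / wdot w π q (s.1 k)) =
      ∑ s : Slate A K, Φ s * ∑ k : Fin K, ∑ k' : Fin (k.1 + 1),
        q s k k' * (γ (s.1 k) * w k k') := by
  rw [sum_reward_eq_sum_wdot w Φ q γ]
  have h := sum_reward_eq_sum_wdot w π q (fun a => γ a * (wdot w Φ q a / wdot w π q a))
  calc _ = _ := by
        refine sum_congr rfl fun s _ => ?_
        congr 1
        refine sum_congr rfl fun k _ => sum_congr rfl fun k' _ => ?_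
        ring
    _ = _ := h
    _ = _ := by
        refine sum_congr rfl fun a _ => ?_
        rw [mul_assoc, div_mul_cancel₀ _ (hpos a).ne']
end
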